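/- There exist a real number θ > 0 and a unique representation basis A of the integers such that A(-x,x) ≥ x^θ for all sufficiently large real numbers x. -/

import Mathlib

open Filter Set

/-- `repCount A n` is the number of representations of `n` as `a + a'` with
`a ≤ a'` and `a, a' ∈ A`. -/
noncomputable def repCount (A : Set ℤ) (n : ℤ) : ℕ :=
  {p : ℤ × ℤ | p.1 ∈ A ∧ p.2 ∈ A ∧ p.1 ≤ p.2 ∧ p.1 + p.2 = n}.ncard

/-- `A` is a unique representation basis of `ℤ` if `r_A(n) = 1` for all `n`. -/
def IsUniqueRepBasis (A : Set ℤ) : Prop := ∀ n : ℤ, repCount A n = 1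

/-- `countIn A y x` is the number of elements of `A` in the real interval `[y, x]`. -/
noncomputable def countIn (A : Set ℤ) (y x : ℝ) : ℕ :=
  {a : ℤ | a ∈ A ∧ y ≤ (a : ℝ) ∧ (a : ℝ) ≤ x}.ncard

/-!
Build `A` greedily as an increasing union of finite Sidon sets `A₀ ⊆ A₁ ⊆ ⋯` with `#Aₖ = 2k`. At
stage `k` take the first integer `n`, in an enumeration of `ℤ`, that is missing from `Aₖ + Aₖ`, and
adjoin a pair `b, n - b`. The new set is Sidon unless `c b` or `n - c b`, for some `1 ≤ c ≤ 4`, is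
of the form `x + y - z` with `x, y, z ∈ Aₖ ∪ {0, n}`; this excludes `O(k³)` values of `b`, so some
`b = O(k³)` is available. Since also `n = O(k²)`, all elements of `Aₖ` are `O(k³)`, whence
`A(-x, x) ≫ x ^ (1 / 3)`.
-/

open Asymptotics
open scoped Pointwise Finset

lemma isLittleO_rpow_rpow_atTop {r s : ℝ} (hrs : r < s) :
    (fun x : ℝ => x ^ r) =o[atTop] fun x : ℝ => x ^ s := by
  have hne : ∀ᶠ x : ℝ in atTop, x ^ s = 0 → x ^ r = 0 := by
    filter_upwards [eventually_gt_atTop 0] with x hx h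
    exact absurd h (Real.rpow_pos_of_pos hx s).ne'
  refine (isLittleO_iff_tendsto' hne).2 ((tendsto_rpow_neg_atTop (sub_pos.2 hrs)).congr' ?_)
  filter_upwards [eventually_gt_atTop 0] with x hx
  rw [neg_sub, Real.rpow_sub hx]

lemma rpow_inv_isBigO_of_mul_pow_le {f : ℝ → ℝ} {C : ℝ} {d : ℕ} (hC : 0 < C) (hd : d ≠ 0)
    (hf : ∀ (k : ℕ) (x : ℝ), C * k ^ d ≤ x → k ≤ f x) :
    (fun x : ℝ => x ^ (d⁻¹ : ℝ)) =O[atTop] f := by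
  refine .of_bound (2 * C ^ (d⁻¹ : ℝ)) ?_
  filter_upwards [eventually_ge_atTop C] with x hx
  have hx0 : 0 ≤ x := hC.le.trans hx
  set y : ℝ := (x / C) ^ (d⁻¹ : ℝ) with hy
  have hy1 : 1 ≤ y := Real.one_le_rpow ((one_le_div hC).2 hx) (by positivity)
  have hyd : C * y ^ d = x := by
    rw [hy, Real.rpow_inv_natCast_pow (by positivity) hd, mul_div_cancel₀ _ hC.ne']
  have hfloor : (⌊y⌋₊ : ℝ) ≤ f x := by
    refine hf _ _ (le_of_le_of_eq ?_ hyd)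
    gcongr
    exact Nat.floor_le (by positivity)
  have hyf : y ≤ 2 * f x := by
    have h₁ : (1 : ℝ) ≤ ⌊y⌋₊ := mod_cast (Nat.one_le_floor_iff y).2 hy1
    linarith [Nat.lt_floor_add_one y]
  calc ‖x ^ (d⁻¹ : ℝ)‖ = C ^ (d⁻¹ : ℝ) * y := by
        rw [Real.norm_of_nonneg (by positivity), hy, ← Real.mul_rpow hC.le (by positivity),
          mul_div_cancel₀ _ hC.ne']
    _ ≤ C ^ (d⁻¹ : ℝ) * (2 * f x) := by gcongr
    _ ≤ 2 * C ^ (d⁻¹ : ℝ) * ‖f x‖ := by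
        rw [mul_left_comm, mul_assoc]
        gcongr
        exact Real.le_norm_self _

lemma exists_le_card_notMem_of_injective {α : Type*} {e : ℕ → α} (he : Function.Injective e)
    (S : Finset α) : ∃ j ≤ #S, e j ∉ S ∧ ∀ i < j, e i ∈ S := by
  classical
  have hex : ∃ j, e j ∉ S := by
    by_contra! h
    exact not_injective_infinite_finite (fun i => (⟨e i, h i⟩ : S)) fun i j hij =>
      he (congrArg Subtype.val hij)
  have hlt : ∀ i < Nat.find hex, e i ∈ S := fun i hi => not_not.1 (Nat.find_min hex hi)
  refine ⟨Nat.find hex, ?_, Nat.find_spec hex, hlt⟩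
  simpa using Finset.card_le_card_of_injOn (s := Finset.range (Nat.find hex)) e
    (fun i hi => hlt i (Finset.mem_range.1 hi)) he.injOn

lemma natAbs_intEquivNat_symm_le (i : ℕ) : (Equiv.intEquivNat.symm i).natAbs ≤ i := by
  obtain ⟨n, rfl⟩ := Equiv.intEquivNat.surjective i
  rw [Equiv.symm_apply_apply]
  cases n with
  | ofNat n => exact Nat.le_mul_of_pos_left n two_pos
  | negSucc n => change n + 1 ≤ 2 * n + 1; omega

lemma exists_mem_Icc_forall_nsmul_notMem (S : Finset ℤ) (m : ℕ) :
    ∃ b ∈ Icc (0 : ℤ) (m * #S), ∀ c ∈ Icc 1 m, c • b ∉ S := by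
  let bad : Finset ℤ := (Finset.Icc 1 m ×ˢ S).image fun p => p.2 / p.1
  have hbad : #bad < #(Finset.Icc (0 : ℤ) (m * #S)) :=
    calc #bad ≤ #(Finset.Icc 1 m ×ˢ S) := Finset.card_image_le
      _ = m * #S := by simp
      _ < #(Finset.Icc (0 : ℤ) (m * #S)) := by rw [Int.card_Icc]; omega
  obtain ⟨b, hb, hb_bad⟩ := Finset.exists_mem_notMem_of_card_lt_card hbad
  refine ⟨b, Finset.mem_Icc.1 hb, fun c hc hcb => hb_bad (Finset.mem_image.2 ⟨(c, c • b), ?_, ?_⟩)⟩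
  · exact Finset.mk_mem_product (Finset.mem_Icc.2 hc) hcb
  · have hc0 : (c : ℤ) ≠ 0 := by have := hc.1; omega
    simpa using Int.mul_ediv_cancel_left b hc0

lemma card_add_sub_union_singleton_sub_le {G : Type*} [AddGroup G] [DecidableEq G]
    (T : Finset G) (n : G) : #((T + T - T) ∪ ({n} - (T + T - T))) ≤ 2 * #T ^ 3 := by
  have hT : #(T + T - T) ≤ #T ^ 3 :=
    calc #(T + T - T) ≤ #(T + T) * #T := Finset.card_sub_le
      _ ≤ #T * #T * #T := by gcongr; exact Finset.card_add_le
      _ = #T ^ 3 := by ring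
  have hnT : #({n} - (T + T - T)) ≤ #T ^ 3 :=
    calc #({n} - (T + T - T)) ≤ #{n} * #(T + T - T) := Finset.card_sub_le
      _ = #(T + T - T) := by rw [Finset.card_singleton, one_mul]
      _ ≤ #T ^ 3 := hT
  linarith [Finset.card_union_le (T + T - T) ({n} - (T + T - T))]

/-- A Sidon set: sums of two elements determine the unordered pair of summands. -/
def IsSidon {G : Type*} [Add G] (A : Set G) : Prop :=
  ∀ ⦃a⦄, a ∈ A → ∀ ⦃b⦄, b ∈ A → ∀ ⦃c⦄, c ∈ A → ∀ ⦃d⦄, d ∈ A →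
    a + b = c + d → a = c ∧ b = d ∨ a = d ∧ b = c

lemma isSidon_empty {G : Type*} [Add G] : IsSidon (∅ : Set G) := fun _ h => h.elim

lemma isSidon_iUnion_of_directed {G ι : Type*} [Add G] {A : ι → Set G}
    (hdir : Directed (· ⊆ ·) A) (hA : ∀ i, IsSidon (A i)) : IsSidon (⋃ i, A i) := by
  classical
  intro a ha b hb c hc d hd
  have : Nonempty ι := (mem_iUnion.1 ha).nonempty
  have habcd : (({a, b, c, d} : Finset G) : Set G) ⊆ ⋃ i, A i := by
    simp [insert_subset_iff, ha, hb, hc, hd]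
  obtain ⟨i, hi⟩ := hdir.exists_mem_subset_of_finset_subset_biUnion habcd
  exact hA i (hi (by simp)) (hi (by simp)) (hi (by simp)) (hi (by simp))

lemma IsSidon.repCount_eq_one {A : Set ℤ} {n : ℤ} (hA : IsSidon A) (hn : n ∈ A + A) :
    repCount A n = 1 := by
  obtain ⟨a, ha, b, hb, hab, rfl⟩ : ∃ a ∈ A, ∃ b ∈ A, a ≤ b ∧ a + b = n := by
    obtain ⟨a, ha, b, hb, h⟩ := hn
    rcases le_total a b with hab | hba
    · exact ⟨a, ha, b, hb, hab, h⟩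
    · exact ⟨b, hb, a, ha, hba, (add_comm b a).trans h⟩
  refine ncard_eq_one.2 ⟨(a, b), ?_⟩
  ext ⟨c, d⟩
  simp only [mem_ofPred_eq, mem_singleton_iff, Prod.mk.injEq]
  constructor
  · rintro ⟨hc, hd, hcd, h⟩
    have := hA hc hd ha hb h
    omega
  · rintro ⟨rfl, rfl⟩
    exact ⟨ha, hb, hab, rfl⟩

section Extension

variable {G : Type*} [AddCommGroup G] {A : Set G}

protected lemma IsSidon.insert {b : G} (hA : IsSidon A) (hb : b ∉ A + A - A) (hbb : b + b ∉ A + A) :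
    IsSidon (insert b A) := by
  have hb' : ∀ x ∈ A, ∀ y ∈ A, ∀ z ∈ A, b + z ≠ x + y := fun x hx y hy z hz h =>
    hb (eq_sub_of_add_eq h ▸ sub_mem_sub (add_mem_add hx hy) hz)
  have hbb' : ∀ x ∈ A, ∀ y ∈ A, b + b ≠ x + y := fun x hx y hy h => hbb (h ▸ add_mem_add hx hy)
  rintro x₁ (rfl | h₁) x₂ (rfl | h₂) x₃ (rfl | h₃) x₄ (rfl | h₄) h
  case inr.inr.inr.inr => exact hA h₁ h₂ h₃ h₄ h
  all_goals grind

lemma IsSidon.insert_sub_insert {T : Set G} {n b : G} (hA : IsSidon A) (hn : n ∉ A + A)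
    (hAT : A ⊆ T) (h₀ : 0 ∈ T) (hₙ : n ∈ T)
    (hb : ∀ c ∈ Icc 1 4, c • b ∉ T + T - T) (hnb : ∀ c ∈ Icc 1 2, n - c • b ∉ T + T - T) :
    IsSidon (insert (n - b) (insert b A)) := by
  have hT : ∀ x ∈ T, ∀ y ∈ T, ∀ z ∈ T, x + y - z ∈ T + T - T := fun x hx y hy z hz =>
    sub_mem_sub (add_mem_add hx hy) hz
  have hb' : ∀ c ∈ Icc 1 4, ∀ x ∈ T, ∀ y ∈ T, ∀ z ∈ T, c • b ≠ x + y - z :=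
    fun c hc x hx y hy z hz h => hb c hc (h ▸ hT x hx y hy z hz)
  have hnb' : ∀ c ∈ Icc 1 2, ∀ x ∈ T, ∀ y ∈ T, ∀ z ∈ T, n - c • b ≠ x + y - z :=
    fun c hc x hx y hy z hz h => hnb c hc (h ▸ hT x hx y hy z hz)
  have hbA : IsSidon (insert b A) := by
    refine hA.insert ?_ ?_
    · rintro ⟨_, ⟨x, hx, y, hy, rfl⟩, z, hz, h⟩
      exact hb' 1 (by simp) x (hAT hx) y (hAT hy) z (hAT hz) (by simp [← h])
    · rintro ⟨x, hx, y, hy, h⟩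
      exact hb' 2 (by simp) x (hAT hx) y (hAT hy) 0 h₀ (by simp [two_nsmul, ← h])
  -- Each relation is solved for a multiple of `b` or for `n` minus one, except `n = x + y`.
  refine hbA.insert ?_ ?_
  · rintro ⟨_, ⟨x, rfl | hx, y, rfl | hy, rfl⟩, z, rfl | hz, h⟩
    · exact hb' 2 (by simp) n hₙ 0 h₀ 0 h₀ (by grind)
    · exact hb' 3 (by simp) n hₙ z (hAT hz) 0 h₀ (by grind)
    · exact hb' 1 (by simp) n hₙ 0 h₀ y (hAT hy) (by grind)
    · exact hb' 2 (by simp) n hₙ z (hAT hz) y (hAT hy) (by grind)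
    · exact hb' 1 (by simp) n hₙ 0 h₀ x (hAT hx) (by grind)
    · exact hb' 2 (by simp) n hₙ z (hAT hz) x (hAT hx) (by grind)
    · exact hn ⟨x, hx, y, hy, by grind⟩
    · exact hnb' 1 (by simp) x (hAT hx) y (hAT hy) z (hAT hz) (by grind)
  · rintro ⟨x, rfl | hx, y, rfl | hy, h⟩
    · exact hb' 4 (by simp) n hₙ n hₙ 0 h₀ (by grind)
    · exact hb' 3 (by simp) n hₙ n hₙ y (hAT hy) (by grind)
    · exact hb' 3 (by simp) n hₙ n hₙ x (hAT hx) (by grind)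
    · exact hnb' 2 (by simp) x (hAT hx) y (hAT hy) n hₙ (by grind)

end Extension

lemma IsSidon.exists_insert_sub_insert {A : Finset ℤ} {n : ℤ} (hA : IsSidon (A : Set ℤ))
    (hn : n ∉ A + A) : ∃ b ∈ Icc (0 : ℤ) (8 * (#A + 2) ^ 3),
      IsSidon ((insert (n - b) (insert b A) : Finset ℤ) : Set ℤ) ∧
      #(insert (n - b) (insert b A)) = #A + 2 := by
  let T : Finset ℤ := insert 0 (insert n A)
  have hAT : A ⊆ T := (Finset.subset_insert _ _).trans (Finset.subset_insert _ _)
  have h₀ : 0 ∈ T := by simp [T]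
  have hₙ : n ∈ T := by simp [T]
  have hT : #T ≤ #A + 2 :=
    (Finset.card_insert_le _ _).trans (Nat.succ_le_succ (Finset.card_insert_le _ _))
  let D := T + T - T
  have hD : #(D ∪ ({n} - D)) ≤ 2 * (#A + 2) ^ 3 :=
    (card_add_sub_union_singleton_sub_le T n).trans (by gcongr)
  obtain ⟨b, ⟨hb0, hb_le⟩, hb⟩ := exists_mem_Icc_forall_nsmul_notMem (D ∪ ({n} - D)) 4
  have hbD : ∀ c ∈ Icc 1 4, c • b ∉ D := fun c hc h => hb c hc (Finset.mem_union_left _ h)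
  have hbnD : ∀ c ∈ Icc 1 4, n - c • b ∉ D := fun c hc h =>
    hb c hc (Finset.mem_union_right _ (Finset.mem_sub.2 ⟨n, by simp, _, h, sub_sub_cancel _ _⟩))
  have hTD : ∀ x ∈ T, x ∈ D := fun x hx =>
    Finset.mem_sub.2 ⟨x + 0, Finset.add_mem_add hx h₀, 0, h₀, by simp⟩
  have hbA : b ∉ A := fun h => hbD 1 (by simp) (by simpa using hTD b (hAT h))
  have hnbA : n - b ∉ A := fun h => hbnD 1 (by simp) (by simpa using hTD _ (hAT h))
  have hne : n - b ≠ b := fun h => by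
    have h2b : 2 • b = n := (two_nsmul b).trans (eq_sub_iff_add_eq.1 h.symm)
    exact hbD 2 (by simp) (h2b ▸ hTD n hₙ)
  refine ⟨b, ⟨hb0, hb_le.trans ?_⟩, ?_, ?_⟩
  · calc (4 : ℤ) * #(D ∪ ({n} - D)) ≤ 4 * (2 * (#A + 2) ^ 3) := by gcongr; exact_mod_cast hD
      _ = 8 * (#A + 2) ^ 3 := by ring
  · push_cast
    refine hA.insert_sub_insert (T := T) (mod_cast hn) (mod_cast hAT) h₀ hₙ
      (fun c hc => ?_) fun c hc => ?_
    · exact_mod_cast hbD c hc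
    · exact_mod_cast hbnD c ⟨hc.1, hc.2.trans (by norm_num)⟩
  · rw [Finset.card_insert_of_notMem (by simp [hne, hnbA]), Finset.card_insert_of_notMem hbA]

/-- The invariant of the greedy construction after `k` steps: a Sidon set of `2 * k` integers of
size `O(k ^ 3)` whose sumset contains the first `k` integers in the enumeration
`Equiv.intEquivNat`. In the constant `68`, the summand `8 * 2 ^ 3` accounts for the adjoined `b`
and `4` for the integer `n` to be represented. -/
structure IsGreedyStage (k : ℕ) (A : Finset ℤ) : Prop where
  isSidon : IsSidon (A : Set ℤ)
  card_eq : #A = 2 * k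
  abs_le_of_mem : ∀ a ∈ A, |a| ≤ 68 * (k : ℤ) ^ 3
  mem_add : ∀ i < k, Equiv.intEquivNat.symm i ∈ A + A

lemma IsGreedyStage.exists_succ {k : ℕ} {A : Finset ℤ} (hA : IsGreedyStage k A) :
    ∃ B, IsGreedyStage (k + 1) B ∧ A ⊆ B := by
  obtain ⟨j, hj_le, hj, hlt⟩ :=
    exists_le_card_notMem_of_injective Equiv.intEquivNat.symm.injective (A + A)
  set n : ℤ := Equiv.intEquivNat.symm j
  have hk : (0 : ℤ) ≤ k := k.cast_nonneg
  have hn : |n| ≤ 4 * (k : ℤ) ^ 2 := by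
    have h : n.natAbs ≤ 2 * k * (2 * k) := by
      rw [← hA.card_eq]
      exact (natAbs_intEquivNat_symm_le j).trans (hj_le.trans Finset.card_add_le)
    zify at h
    linarith
  obtain ⟨b, ⟨hb0, hb⟩, hSidon, hcard⟩ := hA.isSidon.exists_insert_sub_insert hj
  rw [hA.card_eq] at hb hcard
  have hAB : A ⊆ insert (n - b) (insert b A) :=
    (Finset.subset_insert _ _).trans (Finset.subset_insert _ _)
  refine ⟨insert (n - b) (insert b A), ⟨hSidon, hcard, ?_, fun i hi => ?_⟩, hAB⟩
  · have hb' : b ≤ 64 * ((k : ℤ) + 1) ^ 3 := hb.trans_eq (by push_cast; ring)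
    have hn' : |n| ≤ 4 * ((k : ℤ) + 1) ^ 3 := hn.trans (by nlinarith [pow_nonneg hk 3])
    have hnonneg : 0 ≤ ((k : ℤ) + 1) ^ 3 := by positivity
    rw [abs_le] at hn'
    push_cast
    simp only [Finset.forall_mem_insert, abs_le]
    refine ⟨by constructor <;> linarith, by constructor <;> linarith, fun a ha => ?_⟩
    exact abs_le.1 ((hA.abs_le_of_mem a ha).trans (by gcongr; linarith))
  · rcases lt_trichotomy i j with hij | rfl | hij
    · exact Finset.add_subset_add hAB hAB (hlt i hij)
    · exact Finset.mem_add.2 ⟨n - b, by simp, b, by simp, sub_add_cancel n b⟩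
    · exact absurd (hA.mem_add j (by omega)) hj

lemma exists_monotone_isGreedyStage :
    ∃ A : ℕ → Finset ℤ, Monotone A ∧ ∀ k, IsGreedyStage k (A k) := by
  have h₀ : IsGreedyStage 0 ∅ := ⟨by simpa using isSidon_empty, by simp, by simp, by simp⟩
  choose! next hnext hsub using fun k A => IsGreedyStage.exists_succ (k := k) (A := A)
  let A : ℕ → Finset ℤ := Nat.rec ∅ next
  have hA : ∀ k, IsGreedyStage k (A k) := fun k => Nat.rec h₀ (fun k ih => hnext k _ ih) k
  exact ⟨A, monotone_nat_of_le_succ fun k => hsub k _ (hA k), hA⟩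

lemma card_le_countIn {A : Set ℤ} {B : Finset ℤ} {y x : ℝ} (hBA : (B : Set ℤ) ⊆ A)
    (hB : ∀ b ∈ B, y ≤ (b : ℝ) ∧ (b : ℝ) ≤ x) : #B ≤ countIn A y x := by
  have hfin : {a : ℤ | a ∈ A ∧ y ≤ (a : ℝ) ∧ (a : ℝ) ≤ x}.Finite :=
    (finite_Icc ⌈y⌉ ⌊x⌋).subset fun a ⟨_, hya, hax⟩ => ⟨Int.ceil_le.2 hya, Int.le_floor.2 hax⟩
  rw [← ncard_coe_finset]
  exact ncard_le_ncard (fun b hb => ⟨hBA hb, hB b hb⟩) hfin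

theorem exists_theta_urb_ge_rpow_general :
    ∃ A : Set ℤ, IsUniqueRepBasis A ∧
      (fun x : ℝ => x ^ (1 / 3 : ℝ)) =O[atTop] fun x => (countIn A (-x) x : ℝ) := by
  obtain ⟨A, hmono, hA⟩ := exists_monotone_isGreedyStage
  have hsub : ∀ k, (A k : Set ℤ) ⊆ ⋃ i, (A i : Set ℤ) := subset_iUnion fun i => (A i : Set ℤ)
  have hdir : Directed (· ⊆ ·) fun i => (A i : Set ℤ) :=
    Monotone.directed_le fun i j hij => Finset.coe_subset.2 (hmono hij)
  refine ⟨⋃ k, (A k : Set ℤ), fun n => ?_, ?_⟩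
  · refine (isSidon_iUnion_of_directed hdir fun k => (hA k).isSidon).repCount_eq_one ?_
    have hn : n ∈ A (Equiv.intEquivNat n + 1) + A (Equiv.intEquivNat n + 1) := by
      simpa using (hA _).mem_add (Equiv.intEquivNat n) (Nat.lt_succ_self _)
    obtain ⟨a, ha, b, hb, h⟩ := Finset.mem_add.1 hn
    exact ⟨a, hsub _ ha, b, hsub _ hb, h⟩
  · have hcount : ∀ (k : ℕ) (x : ℝ), 68 * (k : ℝ) ^ 3 ≤ x →
        (k : ℝ) ≤ countIn (⋃ i, (A i : Set ℤ)) (-x) x := fun k x hx => by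
      have h : #(A k) ≤ countIn (⋃ i, (A i : Set ℤ)) (-x) x :=
        card_le_countIn (hsub k) fun a ha =>
          abs_le.1 (le_trans (mod_cast (hA k).abs_le_of_mem a ha) hx)
      rw [(hA k).card_eq] at h
      exact_mod_cast (Nat.le_mul_of_pos_left k two_pos).trans h
    simpa using rpow_inv_isBigO_of_mul_pow_le (by norm_num) three_ne_zero hcount

/-- There exist `θ > 0` and a unique representation basis `A` such that
`A(-x,x) ≥ x^θ` for all sufficiently large real `x`. -/
theorem exists_theta_urb_ge_rpow :
    ∃ θ : ℝ, 0 < θ ∧ ∃ A : Set ℤ, IsUniqueRepBasis A ∧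
      ∀ᶠ x : ℝ in atTop, x ^ θ ≤ (countIn A (-x) x : ℝ) := by
  obtain ⟨A, hA, hcount⟩ := exists_theta_urb_ge_rpow_general
  have hθ : (1 / 4 : ℝ) < 1 / 3 := by norm_num
  refine ⟨1 / 4, by norm_num, A, hA, ?_⟩
  filter_upwards [((isLittleO_rpow_rpow_atTop hθ).trans_isBigO hcount).eventuallyLE]
    with x hx
  exact (Real.le_norm_self _).trans (hx.trans_eq (Real.norm_natCast _))
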